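/- For every s ∈ [0,1] there exists a compact set E ⊆ ℝ with Hausdorff dimension s, Fourier dimension 0, and containing arbitrarily long arithmetic progressions. -/

import Mathlib

/-!
Let `E = digitSet S` be the set of numbers in `[0,1]` with a binary expansion supported on a set `S`
of positions. It is compact, being a continuous image of `ℕ → Fin 2`. The set `S` is chosen with
density `s` and so as to contain arbitrarily long blocks of consecutive integers and to miss
infinitely many blocks of length three (`goodPositions`: a Beatty-type set of density `s`, modified
on windows of length `2 k` at `4 ^ k`, which have density zero).

* Hausdorff dimension (`dimH_digitSet`). The set `E` is covered by `2 ^ #(S ∩ [0, n))` intervals of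
  length `2 ^ (-n)`, which gives the upper bound. For the lower bound, push Lebesgue measure on
  `[0,1)` forward under the map that keeps the digits in `S`. As `z = digitProj S z + digitProj Sᶜ z`,
  the preimage of an interval `I` of length about `2 ^ (-n)` is contained in `I + digitSet Sᶜ`, which
  has measure `O(2 ^ #(Sᶜ ∩ [0, n)) * 2 ^ (-n)) = O(2 ^ (-#(S ∩ [0, n))))`; the mass distribution
  principle applies (`le_dimH_digitSet`). Working with `I + digitSet Sᶜ` avoids any discussion of
  carries between adjacent dyadic intervals.
* Fourier dimension (`fourierDim_digitSet`). If `S` misses `q, q + 1, q + 2`, then `2 ^ q * x` is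
  within `1/8` of an integer for all `x ∈ E`, so the real part of the Fourier transform at `2 ^ q` of
  any probability measure on `E` is at least `1/2`.
* Arithmetic progressions (`dyadic_mem_digitSet`). If `[p, p + k) ⊆ S`, then
  `j * 2 ^ (-(p + k)) ∈ E` for all `j < 2 ^ k`.
-/

open MeasureTheory

/-- Fourier dimension of a subset of ℝ. -/
noncomputable def fourierDim (A : Set ℝ) : ℝ :=
  sSup {β : ℝ | β ∈ Set.Icc (0 : ℝ) 1 ∧ ∃ μ : Measure ℝ, IsProbabilityMeasure μ ∧
    μ Aᶜ = 0 ∧ ∃ C : ℝ, 0 < C ∧ ∀ ξ : ℝ, ξ ≠ 0 →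
      ‖∫ x : ℝ, Complex.exp (-2 * Real.pi * Complex.I * ξ * x) ∂μ‖ ≤ C * |ξ| ^ (-β / 2)}

open Filter Topology

/-! ### Sets of restricted binary digits -/

/-- Replaces by `0` every binary digit of `a` whose (zero-based) position is not in `S`. -/
noncomputable def digitMask (S : Set ℕ) (a : ℕ → Fin 2) : ℕ → Fin 2 :=
  open Classical in fun n => if n ∈ S then a n else 0

/-- The digit-restricted set `E_{S,{0}}` in base `2`: the numbers in `[0,1]` having a binary
expansion whose nonzero digits all sit at positions in `S`. Position `n` has weight
`2 ^ (-(n + 1))`. -/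
noncomputable def digitSet (S : Set ℕ) : Set ℝ :=
  Set.range fun a : ℕ → Fin 2 => Real.ofDigits (digitMask S a)

/-- The finite set `S ∩ {0, …, n - 1}`. -/
noncomputable def posBelow (S : Set ℕ) (n : ℕ) : Finset ℕ :=
  open Classical in (Finset.range n).filter (· ∈ S)

/-- The dyadic rational whose binary digits equal to `1` are those at the positions in `T`. -/
noncomputable def dyadicPt (T : Finset ℕ) : ℝ := ∑ i ∈ T, ((2 : ℝ) ^ (i + 1))⁻¹

lemma continuous_digitMask (S : Set ℕ) : Continuous (digitMask S) := by
  classical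
  refine continuous_pi fun n => ?_
  by_cases h : n ∈ S
  · simpa [digitMask, h] using continuous_apply n
  · simpa [digitMask, h] using continuous_const

lemma isCompact_digitSet (S : Set ℕ) : IsCompact (digitSet S) :=
  isCompact_range (Real.continuous_ofDigits.comp (continuous_digitMask S))

lemma mem_posBelow {S : Set ℕ} {n i : ℕ} : i ∈ posBelow S n ↔ i < n ∧ i ∈ S := by
  classical
  simp [posBelow]

lemma card_posBelow_compl (S : Set ℕ) (n : ℕ) :
    (posBelow S n).card + (posBelow Sᶜ n).card = n := by
  classical
  simpa [posBelow] using Finset.card_filter_add_card_filter_not (s := Finset.range n) (· ∈ S)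

/-- The `2 ^ #(S ∩ [0, n))` dyadic intervals of length `2 ^ (-n)` with left endpoint in the
digit-restricted set cover it. -/
lemma digitSet_cover {S : Set ℕ} {y : ℝ} (hy : y ∈ digitSet S) (n : ℕ) :
    ∃ T ∈ (posBelow S n).powerset,
      y ∈ Set.Icc (dyadicPt T) (dyadicPt T + ((2 : ℝ) ^ n)⁻¹) := by
  classical
  obtain ⟨a, rfl⟩ := hy
  refine ⟨(Finset.range n).filter fun i => digitMask S a i = 1, ?_, ?_⟩
  · rw [Finset.mem_powerset]
    intro i hi
    rw [Finset.mem_filter, Finset.mem_range] at hi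
    rw [mem_posBelow]
    refine ⟨hi.1, ?_⟩
    by_contra h
    simp [digitMask, h] at hi
  · have h := Real.ofDigits_eq_sum_add_ofDigits (digitMask S a) n
    have h2 : dyadicPt ((Finset.range n).filter fun i => digitMask S a i = 1)
        = ∑ i ∈ Finset.range n, Real.ofDigitsTerm (digitMask S a) i := by
      rw [dyadicPt, Finset.sum_filter]
      refine Finset.sum_congr rfl fun i _ => ?_
      have : ∀ x : Fin 2, (if x = 1 then ((2 : ℝ) ^ (i + 1))⁻¹ else 0)
          = (x : ℕ) * (((2 : ℕ) : ℝ) ^ (i + 1))⁻¹ := by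
        intro x
        fin_cases x <;> simp
      exact this _
    have h0 := Real.ofDigits_nonneg (fun i ↦ digitMask S a (i + n))
    have h1 := Real.ofDigits_le_one (fun i ↦ digitMask S a (i + n))
    have hp : (0 : ℝ) < ((2 : ℝ) ^ n)⁻¹ := by positivity
    simp only [Nat.cast_ofNat] at h
    rw [h2]
    constructor <;> dsimp only <;> rw [h] <;> nlinarith

lemma ofDigits_eq_mask_add (S : Set ℕ) (a : ℕ → Fin 2) :
    Real.ofDigits a = Real.ofDigits (digitMask S a) + Real.ofDigits (digitMask Sᶜ a) := by
  classical
  rw [Real.ofDigits, Real.ofDigits, Real.ofDigits,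
    ← Real.summable_ofDigitsTerm.tsum_add Real.summable_ofDigitsTerm]
  refine tsum_congr fun n => ?_
  by_cases h : n ∈ S <;> simp [Real.ofDigitsTerm, digitMask, h]

/-! ### Hausdorff dimension -/

/-- Keeps only the binary digits of `x` at positions in `S`; meaningful for `x ∈ [0,1)`, where
`Real.digits` gives the expansion of `x`. -/
noncomputable def digitProj (S : Set ℕ) (x : ℝ) : ℝ :=
  Real.ofDigits (digitMask S (Real.digits x 2))

lemma measurable_digitProj (S : Set ℕ) : Measurable (digitProj S) := by
  refine (Real.continuous_ofDigits.comp (continuous_digitMask S)).measurable.comp ?_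
  refine measurable_pi_iff.2 fun n => ?_
  unfold Real.digits
  have h : Measurable fun x : ℝ => ⌊x * ((2 : ℕ) : ℝ) ^ (n + 1)⌋₊ :=
    (measurable_id.mul_const _).nat_floor
  exact (measurable_of_countable (fun m : ℕ => Fin.ofNat 2 m)).comp h

/-- If `z ∈ [0,1)` projects into the ball, then `z` is a point of the ball plus a point of
`digitSet Sᶜ`, and the latter set is covered by `2 ^ (n - #(S ∩ [0, n)))` intervals of length
`2 ^ (-n)`. -/
lemma volume_proj_ball_le (S : Set ℕ) (n : ℕ) (x r : ℝ) (hr : r ≤ ((2 : ℝ) ^ n)⁻¹) :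
    volume (Set.Ico (0 : ℝ) 1 ∩ digitProj S ⁻¹' Metric.closedBall x r)
      ≤ ENNReal.ofReal (3 * ((2 : ℝ) ^ (posBelow S n).card)⁻¹) := by
  have hsub : Set.Ico (0 : ℝ) 1 ∩ digitProj S ⁻¹' Metric.closedBall x r
      ⊆ ⋃ T ∈ (posBelow Sᶜ n).powerset,
        Set.Icc (dyadicPt T + x - ((2 : ℝ) ^ n)⁻¹) (dyadicPt T + x + 2 * ((2 : ℝ) ^ n)⁻¹) := by
    rintro z ⟨hz, hz2⟩
    have h1 : digitProj Sᶜ z ∈ digitSet Sᶜ := ⟨_, rfl⟩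
    obtain ⟨T, hT, hT1, hT2⟩ := digitSet_cover h1 n
    have h3 : z = digitProj S z + digitProj Sᶜ z := by
      have := ofDigits_eq_mask_add S (Real.digits z 2)
      rwa [Real.ofDigits_digits one_lt_two hz] at this
    rw [Set.mem_preimage, Metric.mem_closedBall, Real.dist_eq, abs_le] at hz2
    simp only [Set.mem_iUnion]
    refine ⟨T, hT, ?_, ?_⟩ <;> linarith [hz2.1, hz2.2]
  calc _ ≤ _ := measure_mono hsub
    _ ≤ _ := measure_biUnion_finset_le _ _
    _ = ENNReal.ofReal (∑ T ∈ (posBelow Sᶜ n).powerset, 3 * ((2 : ℝ) ^ n)⁻¹) := by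
        rw [ENNReal.ofReal_sum_of_nonneg (fun _ _ => by positivity)]
        refine Finset.sum_congr rfl fun T _ => ?_
        rw [Real.volume_Icc]
        congr 1
        ring
    _ = _ := by
        congr 1
        rw [Finset.sum_const, Finset.card_powerset, nsmul_eq_mul]
        have hsplit : (2 : ℝ) ^ n = 2 ^ (posBelow S n).card * 2 ^ (posBelow Sᶜ n).card := by
          rw [← pow_add, card_posBelow_compl]
        rw [hsplit]
        push_cast
        field_simp

/-- Mass distribution principle for the image of Lebesgue measure on `[0,1)` under `digitProj S`. -/
lemma le_dimH_digitSet {S : Set ℕ} {d : ℝ} (hd : 0 < d) {c : ℝ}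
    (hc : ∀ n : ℕ, d * n - c ≤ (posBelow S n).card) :
    ENNReal.ofReal d ≤ dimH (digitSet S) := by
  set ν : Measure ℝ := (volume.restrict (Set.Ico (0 : ℝ) 1)).map (digitProj S) with hν
  have hball : ∀ (n : ℕ) (x r : ℝ), r ≤ ((2 : ℝ) ^ n)⁻¹ → ν (Metric.closedBall x r)
      ≤ ENNReal.ofReal (3 * (2 : ℝ) ^ c * (((2 : ℝ) ^ n)⁻¹) ^ d) := by
    intro n x r hr
    rw [hν, Measure.map_apply (measurable_digitProj S) Metric.isClosed_closedBall.measurableSet,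
      Measure.restrict_apply
        (measurable_digitProj S Metric.isClosed_closedBall.measurableSet), Set.inter_comm]
    refine (volume_proj_ball_le S n x r hr).trans (ENNReal.ofReal_le_ofReal ?_)
    rw [mul_assoc]
    refine mul_le_mul_of_nonneg_left ?_ (by norm_num)
    rw [← Real.rpow_natCast 2 n, ← Real.rpow_natCast 2 (posBelow S n).card,
      ← Real.rpow_neg (by norm_num), ← Real.rpow_neg (by norm_num), ← Real.rpow_mul (by norm_num),
      ← Real.rpow_add (by norm_num)]
    exact Real.rpow_le_rpow_of_exponent_le (by norm_num) (by linarith [hc n])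
  set C : ℝ := 3 * (2 : ℝ) ^ c * 2 ^ d with hC
  have hCpos : 0 < C := by positivity
  have hset : ∀ U : Set ℝ, Metric.ediam U ≤ 1 →
      ν U ≤ ENNReal.ofReal C * Metric.ediam U ^ d := by
    intro U hU
    rcases U.eq_empty_or_nonempty with rfl | ⟨x, hx⟩
    · simp
    have htop : Metric.ediam U ≠ ⊤ := ne_top_of_le_ne_top ENNReal.one_ne_top hU
    have hb : Bornology.IsBounded U := Metric.isBounded_iff_ediam_ne_top.2 htop
    have hdiam : Metric.ediam U = ENNReal.ofReal (Metric.diam U) := by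
      rw [Metric.diam, ENNReal.ofReal_toReal htop]
    have hsub : U ⊆ Metric.closedBall x (Metric.diam U) := fun y hy =>
      Metric.mem_closedBall.2 (Metric.dist_le_diam_of_mem hb hy hx)
    have hle1 : Metric.diam U ≤ 1 := by
      rw [hdiam] at hU
      simpa using hU
    rcases (Metric.diam_nonneg (s := U)).eq_or_lt with h0 | hpos
    · -- Diameter zero: every ball of radius `2 ^ (-n)` about `x` contains `U`, so `ν U = 0`.
      have hlim : Tendsto (fun n : ℕ => ENNReal.ofReal (3 * (2 : ℝ) ^ c * (((2 : ℝ) ^ n)⁻¹) ^ d))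
          atTop (𝓝 0) := by
        have h1 : Tendsto (fun n : ℕ => ((2 : ℝ) ^ n)⁻¹) atTop (𝓝 0) :=
          (tendsto_pow_atTop_atTop_of_one_lt one_lt_two).inv_tendsto_atTop
        have h2 := (h1.rpow_const (p := d) (Or.inr hd.le)).const_mul (3 * (2 : ℝ) ^ c)
        rw [Real.zero_rpow hd.ne', mul_zero] at h2
        simpa using ENNReal.tendsto_ofReal h2
      have : ν U ≤ 0 := ge_of_tendsto' hlim fun n =>
        (measure_mono hsub).trans (hball n x _ (by rw [← h0]; positivity))
      exact this.trans zero_le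
    · obtain ⟨n, hn1, hn2⟩ := exists_nat_pow_near_of_lt_one hpos hle1
        (show (0 : ℝ) < 1 / 2 by norm_num) (by norm_num)
      refine (measure_mono hsub).trans ((hball n x _ (by simpa using hn2)).trans ?_)
      rw [hdiam, ENNReal.ofReal_rpow_of_pos hpos, ← ENNReal.ofReal_mul hCpos.le]
      refine ENNReal.ofReal_le_ofReal ?_
      rw [hC, mul_assoc _ ((2 : ℝ) ^ d), ← Real.mul_rpow (by norm_num) hpos.le]
      have : ((2 : ℝ) ^ n)⁻¹ ≤ 2 * Metric.diam U := by
        rw [pow_succ, one_div, inv_pow] at hn1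
        linarith
      gcongr
  have hK0 : ENNReal.ofReal C ≠ 0 := by simpa using hCpos
  have hle : (ENNReal.ofReal C)⁻¹ • ν ≤ Measure.hausdorffMeasure d := by
    refine Measure.le_hausdorffMeasure d _ 1 one_pos fun U hU => ?_
    rw [Measure.smul_apply, smul_eq_mul]
    calc _ ≤ (ENNReal.ofReal C)⁻¹ * (ENNReal.ofReal C * Metric.ediam U ^ d) := by
          gcongr
          exact hset U hU
      _ = _ := by rw [← mul_assoc, ENNReal.inv_mul_cancel hK0 ENNReal.ofReal_ne_top, one_mul]
  have hν1 : ν (digitSet S) = 1 := by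
    have hpre : digitProj S ⁻¹' digitSet S = Set.univ :=
      Set.eq_univ_of_forall fun x => ⟨_, rfl⟩
    rw [hν, Measure.map_apply (measurable_digitProj S) (isCompact_digitSet S).measurableSet, hpre]
    simp
  have hne : (Measure.hausdorffMeasure ((d.toNNReal : NNReal) : ℝ) : Measure ℝ) (digitSet S) ≠ 0 := by
    rw [Real.coe_toNNReal d hd.le]
    intro h0
    have := hle (digitSet S)
    rw [h0, Measure.smul_apply, hν1, smul_eq_mul, mul_one] at this
    simp at this
  exact le_dimH_of_hausdorffMeasure_ne_zero hne

lemma dimH_digitSet_le {S : Set ℕ} {d e : ℝ} (he : e < d) (hd : 0 < d) {c : ℝ}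
    (hc : ∀ n : ℕ, (posBelow S n).card ≤ e * n + c) :
    dimH (digitSet S) ≤ ENNReal.ofReal d := by
  have hpow : Tendsto (fun n : ℕ => ((2 : ℝ) ^ n)⁻¹) atTop (𝓝 0) :=
    (tendsto_pow_atTop_atTop_of_one_lt one_lt_two).inv_tendsto_atTop
  have hH := Measure.hausdorffMeasure_le_liminf_sum (X := ℝ) (l := atTop)
    (ι := fun n : ℕ => (posBelow S n).powerset) d (digitSet S)
    (fun n => ENNReal.ofReal (((2 : ℝ) ^ n)⁻¹)) (by simpa using ENNReal.tendsto_ofReal hpow)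
    (fun n T => Set.Icc (dyadicPt T) (dyadicPt T + ((2 : ℝ) ^ n)⁻¹))
    (Eventually.of_forall fun n T => by rw [Real.ediam_Icc]; simp)
    (Eventually.of_forall fun n y hy => by
      obtain ⟨T, hT, h⟩ := digitSet_cover hy n
      exact Set.mem_iUnion.2 ⟨⟨T, hT⟩, h⟩)
  have hlim : Tendsto (fun n : ℕ => ∑ T : (posBelow S n).powerset,
      Metric.ediam (Set.Icc (dyadicPt T) (dyadicPt T + ((2 : ℝ) ^ n)⁻¹)) ^ d) atTop (𝓝 0) := by
    have h1 : Tendsto (fun n : ℕ => (2 : ℝ) ^ c * (((2 : ℝ) ^ n)⁻¹) ^ (d - e)) atTop (𝓝 0) := by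
      have h2 := (hpow.rpow_const (p := d - e) (Or.inr (by linarith))).const_mul ((2 : ℝ) ^ c)
      rwa [Real.zero_rpow (by linarith), mul_zero] at h2
    have h3 := ENNReal.tendsto_ofReal h1
    rw [ENNReal.ofReal_zero] at h3
    refine tendsto_of_tendsto_of_tendsto_of_le_of_le tendsto_const_nhds h3
      (fun _ => zero_le) fun n => ?_
    dsimp only
    have hterm : ∀ T : (posBelow S n).powerset,
        Metric.ediam (Set.Icc (dyadicPt T) (dyadicPt T + ((2 : ℝ) ^ n)⁻¹)) ^ d
          = ENNReal.ofReal ((((2 : ℝ) ^ n)⁻¹) ^ d) := by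
      intro T
      rw [Real.ediam_Icc, add_sub_cancel_left, ENNReal.ofReal_rpow_of_pos (by positivity)]
    simp only [hterm]
    rw [← ENNReal.ofReal_sum_of_nonneg (fun _ _ => by positivity)]
    refine ENNReal.ofReal_le_ofReal ?_
    rw [Finset.sum_const, Finset.card_univ, Fintype.card_coe, Finset.card_powerset, nsmul_eq_mul]
    push_cast
    rw [← Real.rpow_natCast 2 n, ← Real.rpow_natCast 2 (posBelow S n).card,
      ← Real.rpow_neg (by norm_num), ← Real.rpow_mul (by norm_num), ← Real.rpow_mul (by norm_num),
      ← Real.rpow_add (by norm_num), ← Real.rpow_add (by norm_num)]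
    exact Real.rpow_le_rpow_of_exponent_le (by norm_num) (by linarith [hc n])
  rw [hlim.liminf_eq] at hH
  refine dimH_le_of_hausdorffMeasure_ne_top (d := d.toNNReal) ?_
  rw [Real.coe_toNNReal d hd.le, nonpos_iff_eq_zero.1 hH]
  exact ENNReal.zero_ne_top

lemma dimH_digitSet {S : Set ℕ} {s : ℝ} (hs : 0 ≤ s)
    (h : ∀ ε > 0, ∃ c : ℝ, ∀ n : ℕ, |((posBelow S n).card : ℝ) - s * n| ≤ ε * n + c) :
    dimH (digitSet S) = ENNReal.ofReal s := by
  refine le_antisymm ?_ ?_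
  · refine ENNReal.le_of_forall_pos_le_add fun ε hε _ => ?_
    have hε' : (0 : ℝ) < ε := hε
    obtain ⟨c, hc⟩ := h (ε / 2) (by positivity)
    have := dimH_digitSet_le (S := S) (d := s + ε) (e := s + ε / 2) (c := c) (by linarith)
      (by linarith) fun n => by have := (abs_le.1 (hc n)).2; linarith
    rwa [ENNReal.ofReal_add hs hε'.le, ENNReal.ofReal_coe_nnreal] at this
  · refine ENNReal.le_of_forall_pos_le_add fun ε hε _ => ?_
    have hε' : (0 : ℝ) < ε := hε
    rw [← tsub_le_iff_right, ← ENNReal.ofReal_coe_nnreal, ← ENNReal.ofReal_sub _ hε'.le]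
    rcases le_or_gt (s - ε) 0 with h0 | h0
    · rw [ENNReal.ofReal_of_nonpos h0]
      exact zero_le
    · obtain ⟨c, hc⟩ := h ε hε'
      exact le_dimH_digitSet h0 (c := c) fun n => by have := (abs_le.1 (hc n)).1; linarith

/-! ### Fourier dimension -/

/-- Three consecutive forbidden positions `q, q + 1, q + 2` force the fractional part of `2 ^ q * y`
to lie in `[0, 1/8]`. -/
lemma half_le_cos_of_gap {S : Set ℕ} {q : ℕ} (hq : ∀ i < 3, q + i ∉ S) {y : ℝ}
    (hy : y ∈ digitSet S) : 1 / 2 ≤ Real.cos (2 * Real.pi * 2 ^ q * y) := by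
  obtain ⟨T, hT, h1, h2⟩ := digitSet_cover hy (q + 3)
  obtain ⟨m, hm⟩ : ∃ m : ℕ, (2 : ℝ) ^ q * dyadicPt T = m := by
    refine ⟨∑ i ∈ T, 2 ^ (q - (i + 1)), ?_⟩
    rw [dyadicPt, Finset.mul_sum]
    push_cast
    refine Finset.sum_congr rfl fun i hi => ?_
    obtain ⟨hi1, hi2⟩ := mem_posBelow.1 (Finset.mem_powerset.1 hT hi)
    have hlt : i + 1 ≤ q := by
      by_contra hcon
      refine hq (i - q) (by omega) ?_
      rwa [show q + (i - q) = i by omega]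
    rw [← div_eq_mul_inv, pow_sub₀ _ two_ne_zero hlt, div_eq_mul_inv]
  have hp : (0 : ℝ) < 2 ^ q := by positivity
  set u : ℝ := 2 ^ q * (y - dyadicPt T) with hu
  have hu0 : 0 ≤ u := mul_nonneg hp.le (by linarith)
  have hu1 : u ≤ 1 / 8 := by
    have h3 : y - dyadicPt T ≤ ((2 : ℝ) ^ (q + 3))⁻¹ := by linarith
    calc u ≤ 2 ^ q * ((2 : ℝ) ^ (q + 3))⁻¹ := mul_le_mul_of_nonneg_left h3 hp.le
      _ = 1 / 8 := by rw [pow_add]; field_simp; norm_num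
  have heq : 2 * Real.pi * 2 ^ q * y = 2 * Real.pi * u + m * (2 * Real.pi) := by
    rw [← hm, hu]; ring
  rw [heq, Real.cos_add_nat_mul_two_pi, ← Real.cos_pi_div_three]
  have := Real.pi_pos
  exact Real.cos_le_cos_of_nonneg_of_le_pi (by positivity) (by linarith) (by nlinarith)

/-- With infinitely many gaps of length three, the Fourier transform of any probability measure on
`digitSet S` has modulus at least `1 / 2` at infinitely many powers of `2`, so it cannot decay. -/
lemma fourierDim_digitSet {S : Set ℕ} (hS : ∀ N : ℕ, ∃ q ≥ N, ∀ i < 3, q + i ∉ S) :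
    fourierDim (digitSet S) = 0 := by
  refine le_antisymm (Real.sSup_nonpos ?_) (Real.sSup_nonneg fun β hβ => hβ.1.1)
  rintro β ⟨-, μ, hμ, hμE, C, hC, hdecay⟩
  by_contra! hβ
  have hlim : Tendsto (fun n : ℕ => C * |(2 : ℝ) ^ n| ^ (-β / 2)) atTop (𝓝 0) := by
    have h1 : Tendsto (fun n : ℕ => |(2 : ℝ) ^ n|) atTop atTop :=
      tendsto_abs_atTop_atTop.comp (tendsto_pow_atTop_atTop_of_one_lt one_lt_two)
    have h2 := ((tendsto_rpow_neg_atTop (y := β / 2) (by positivity)).comp h1).const_mul C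
    rw [mul_zero] at h2
    simpa [Function.comp_def, neg_div] using h2
  obtain ⟨N, hN⟩ := eventually_atTop.1 (hlim.eventually_lt_const (show (0 : ℝ) < 1 / 2 by norm_num))
  obtain ⟨q, hqN, hq⟩ := hS N
  have hd := (hdecay (2 ^ q) (by positivity)).trans_lt (hN q hqN)
  refine hd.not_ge ?_
  set f : ℝ → ℂ := fun x =>
    Complex.exp (-2 * Real.pi * Complex.I * ((2 ^ q : ℝ) : ℂ) * x) with hf
  have hfe : ∀ x : ℝ, f x = Complex.exp ((-(2 * Real.pi * 2 ^ q * x) : ℝ) * Complex.I) := by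
    intro x
    rw [hf]
    push_cast
    ring_nf
  have hint : Integrable f μ := by
    refine Integrable.of_bound (C := 1) (by fun_prop) (Eventually.of_forall fun x => ?_)
    rw [hfe, Complex.norm_exp_ofReal_mul_I]
  have hre : ∀ x, (f x).re = Real.cos (2 * Real.pi * 2 ^ q * x) := by
    intro x
    rw [hfe, Complex.exp_ofReal_mul_I_re, Real.cos_neg]
  calc (1 / 2 : ℝ) = ∫ _, (1 / 2 : ℝ) ∂μ := by simp
    _ ≤ ∫ x, (f x).re ∂μ := by
        refine integral_mono_ae (integrable_const _) hint.re ?_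
        filter_upwards [mem_ae_iff.2 hμE] with x hx
        show _ ≤ (f x).re
        rw [hre]
        exact half_le_cos_of_gap hq hx
    _ = (∫ x, f x ∂μ).re := integral_re hint
    _ ≤ ‖∫ x, f x ∂μ‖ := Complex.re_le_norm _

/-! ### Arithmetic progressions -/

/-- A block of `k` consecutive allowed positions gives an arithmetic progression of length `2 ^ k`
starting at `0`. -/
lemma dyadic_mem_digitSet {S : Set ℕ} {p k : ℕ} (hS : ∀ i < k, p + i ∈ S) {j : ℕ}
    (hj : j < 2 ^ k) : (j : ℝ) * ((2 : ℝ) ^ (p + k))⁻¹ ∈ digitSet S := by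
  classical
  set x : ℝ := (j : ℝ) * ((2 : ℝ) ^ (p + k))⁻¹ with hx
  have hpow : (0 : ℝ) < 2 ^ (p + k) := by positivity
  have hj' : (j : ℝ) < 2 ^ k := by exact_mod_cast hj
  have hxI : x ∈ Set.Ico (0 : ℝ) 1 := by
    refine ⟨by positivity, ?_⟩
    rw [hx, ← div_eq_mul_inv, div_lt_one hpow]
    exact hj'.trans_le (pow_le_pow_right₀ one_le_two (by omega))
  refine ⟨Real.digits x 2, ?_⟩
  dsimp only
  rw [show digitMask S (Real.digits x 2) = Real.digits x 2 from ?_,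
    Real.ofDigits_digits one_lt_two hxI]
  funext n
  by_cases hn : n ∈ S
  · simp [digitMask, hn]
  simp only [digitMask, hn, if_false]
  symm
  rcases lt_or_ge n p with hnp | hnp
  · have : ⌊x * ((2 : ℕ) : ℝ) ^ (n + 1)⌋₊ = 0 := by
      rw [Nat.floor_eq_zero, hx, Nat.cast_ofNat, mul_right_comm, ← div_eq_mul_inv,
        div_lt_one hpow]
      have h2 : (2 : ℝ) ^ (n + 1) ≤ 2 ^ p := pow_le_pow_right₀ one_le_two (by omega)
      calc (j : ℝ) * 2 ^ (n + 1) < 2 ^ k * 2 ^ (n + 1) := by gcongr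
        _ ≤ 2 ^ k * 2 ^ p := by gcongr
        _ = 2 ^ (p + k) := by rw [pow_add, mul_comm]
    rw [Real.digits, this]
    rfl
  · have hge : p + k ≤ n := by
      by_contra hcon
      exact hn (by simpa [show p + (n - p) = n by omega] using hS (n - p) (by omega))
    have : ⌊x * ((2 : ℕ) : ℝ) ^ (n + 1)⌋₊ = j * 2 ^ (n - (p + k)) * 2 := by
      rw [← Nat.floor_natCast (R := ℝ) (j * 2 ^ (n - (p + k)) * 2)]
      congr 1
      push_cast
      rw [hx, mul_assoc, mul_assoc, ← pow_succ, ← div_eq_inv_mul,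
        show n + 1 = (n - (p + k) + 1) + (p + k) by omega, pow_add _ _ (p + k)]
      field_simp
    rw [Real.digits, this]
    ext
    simp

/-! ### The set of positions -/

/-- The union of the windows `[4 ^ k, 4 ^ k + 2 k)`. -/
def windows : Set ℕ := {n | ∃ k, 4 ^ k ≤ n ∧ n < 4 ^ k + 2 * k}

/-- A set of positions of density `s`: those where `⌊s * n⌋` jumps. -/
def beatty (s : ℝ) : Set ℕ := {n | ⌊s * (n + 1 : ℕ)⌋₊ ≠ ⌊s * n⌋₊}

/-- The set `beatty s`, modified on each window `[4 ^ k, 4 ^ k + 2 k)`: the first half of the window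
is included and the second half excluded. -/
def goodPositions (s : ℝ) : Set ℕ :=
  {n | ∃ k, 4 ^ k ≤ n ∧ n < 4 ^ k + k} ∪ beatty s \ windows

lemma card_posBelow_le_of_subset {A B C : Set ℕ} (h : A ⊆ B ∪ C) (n : ℕ) :
    (posBelow A n).card ≤ (posBelow B n).card + (posBelow C n).card := by
  classical
  refine (Finset.card_le_card fun i hi => ?_).trans (Finset.card_union_le _ _)
  rw [Finset.mem_union, mem_posBelow, mem_posBelow]
  obtain ⟨h1, h2⟩ := mem_posBelow.1 hi
  exact (h h2).imp (⟨h1, ·⟩) (⟨h1, ·⟩)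

lemma card_posBelow_beatty {s : ℝ} (hs : s ∈ Set.Icc (0 : ℝ) 1) (n : ℕ) :
    (posBelow (beatty s) n).card = ⌊s * n⌋₊ := by
  classical
  induction n with
  | zero => simp [posBelow]
  | succ n ih =>
    rw [posBelow, Finset.range_add_one, Finset.filter_insert]
    have hmono : ⌊s * n⌋₊ ≤ ⌊s * (n + 1 : ℕ)⌋₊ := by
      apply Nat.floor_mono
      push_cast
      nlinarith [hs.1]
    have hstep : ⌊s * (n + 1 : ℕ)⌋₊ ≤ ⌊s * n⌋₊ + 1 := by
      rw [← Nat.floor_add_one (mul_nonneg hs.1 n.cast_nonneg)]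
      apply Nat.floor_mono
      push_cast
      nlinarith [hs.2]
    split_ifs with h
    · rw [Finset.card_insert_of_notMem (by simp)]
      change (posBelow (beatty s) n).card + 1 = _
      have h' : ⌊s * (n + 1 : ℕ)⌋₊ ≠ ⌊s * n⌋₊ := h
      omega
    · change (posBelow (beatty s) n).card = _
      have h' : ⌊s * (n + 1 : ℕ)⌋₊ = ⌊s * n⌋₊ := not_not.1 h
      omega

lemma card_posBelow_windows_le (n : ℕ) :
    (posBelow windows n).card ≤ 2 * (Nat.log 4 n + 1) ^ 2 := by
  classical
  have hsub : posBelow windows n ⊆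
      (Finset.range (Nat.log 4 n + 1) ×ˢ Finset.range (2 * (Nat.log 4 n + 1))).image
        fun q => 4 ^ q.1 + q.2 := by
    intro m hm
    obtain ⟨hmn, k, hk1, hk2⟩ := mem_posBelow.1 hm
    have hk : k ≤ Nat.log 4 n := Nat.le_log_of_pow_le (by norm_num) (by omega)
    refine Finset.mem_image.2 ⟨(k, m - 4 ^ k), ?_, ?_⟩
    · simp only [Finset.mem_product, Finset.mem_range]
      omega
    · dsimp only
      omega
  refine (Finset.card_le_card hsub).trans (Finset.card_image_le.trans ?_)
  rw [Finset.card_product, Finset.card_range, Finset.card_range]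
  exact le_of_eq (by ring)

/-- The windows have density zero, since they meet `[0, n)` in `O((log n) ^ 2)` points. -/
lemma card_posBelow_windows_small {ε : ℝ} (hε : 0 < ε) :
    ∃ c : ℝ, ∀ n : ℕ, ((posBelow windows n).card : ℝ) ≤ ε * n + c := by
  -- With `L = Nat.log 4 n` and `4 ^ L ≤ n`, it suffices that `2 (L + 1) ^ 2 ≤ ε * 4 ^ L` for
  -- large `L`; smaller `L` are absorbed in the constant.
  have hlim : Tendsto (fun L : ℕ => (2 * 4 : ℝ) * (((L + 1 : ℕ) : ℝ) ^ 2 / 4 ^ (L + 1)))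
      atTop (𝓝 0) := by
    have := ((tendsto_add_atTop_iff_nat 1).2
      (tendsto_pow_const_div_const_pow_of_one_lt 2 (show (1 : ℝ) < 4 by norm_num))).const_mul
        (2 * 4 : ℝ)
    simpa using this
  obtain ⟨L₀, hL₀⟩ := eventually_atTop.1 (hlim.eventually_lt_const hε)
  refine ⟨2 * ((L₀ : ℝ) + 1) ^ 2, fun n => ?_⟩
  have h1 : ((posBelow windows n).card : ℝ) ≤ 2 * ((Nat.log 4 n : ℝ) + 1) ^ 2 := by
    exact_mod_cast card_posBelow_windows_le n
  rcases Nat.eq_zero_or_pos n with rfl | hn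
  · have : posBelow windows 0 = ∅ := by simp [posBelow]
    rw [this]
    simp only [Finset.card_empty, Nat.cast_zero, mul_zero, zero_add]
    positivity
  rcases le_or_gt L₀ (Nat.log 4 n) with h | h
  · have h2 := hL₀ _ h
    have h3 : ((4 : ℝ) ^ Nat.log 4 n) ≤ n := by
      exact_mod_cast Nat.pow_log_le_self 4 hn.ne'
    have h4 : 2 * ((Nat.log 4 n : ℝ) + 1) ^ 2 ≤ ε * 4 ^ Nat.log 4 n := by
      push_cast at h2
      rw [pow_succ (4 : ℝ), ← mul_div_assoc, div_lt_iff₀ (by positivity)] at h2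
      linarith
    have h5 : ε * 4 ^ Nat.log 4 n ≤ ε * n := mul_le_mul_of_nonneg_left h3 hε.le
    have h6 : 0 ≤ 2 * ((L₀ : ℝ) + 1) ^ 2 := by positivity
    linarith
  · have h2 : (Nat.log 4 n : ℝ) ≤ L₀ := by exact_mod_cast h.le
    have h3 : 2 * ((Nat.log 4 n : ℝ) + 1) ^ 2 ≤ 2 * ((L₀ : ℝ) + 1) ^ 2 := by gcongr
    have h4 : 0 ≤ ε * n := by positivity
    linarith

lemma goodPositions_density {s : ℝ} (hs : s ∈ Set.Icc (0 : ℝ) 1) {ε : ℝ} (hε : 0 < ε) :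
    ∃ c : ℝ, ∀ n : ℕ, |((posBelow (goodPositions s) n).card : ℝ) - s * n| ≤ ε * n + c := by
  obtain ⟨c, hc⟩ := card_posBelow_windows_small hε
  refine ⟨c + 1, fun n => ?_⟩
  have h1 : ((posBelow (goodPositions s) n).card : ℝ)
      ≤ (posBelow (beatty s) n).card + (posBelow windows n).card := by
    refine mod_cast card_posBelow_le_of_subset ?_ n
    rintro m (⟨k, hk1, hk2⟩ | ⟨hm, -⟩)
    · exact Or.inr ⟨k, hk1, by omega⟩
    · exact Or.inl hm
  have h2 : ((posBelow (beatty s) n).card : ℝ)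
      ≤ (posBelow (goodPositions s) n).card + (posBelow windows n).card := by
    refine mod_cast card_posBelow_le_of_subset ?_ n
    intro m hm
    by_cases h : m ∈ windows
    · exact Or.inr h
    · exact Or.inl (Or.inr ⟨hm, h⟩)
  rw [card_posBelow_beatty hs] at h1 h2
  have h3 := Nat.floor_le (mul_nonneg hs.1 (Nat.cast_nonneg (α := ℝ) n))
  have h4 := Nat.lt_floor_add_one (s * n)
  have h5 := hc n
  rw [abs_le]
  constructor <;> linarith

lemma not_mem_goodPositions (s : ℝ) {k i : ℕ} (hi : i < k) :
    4 ^ k + k + i ∉ goodPositions s := by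
  rintro (⟨l, hl1, hl2⟩ | ⟨-, h⟩)
  · have hk : k < 4 ^ k := Nat.lt_pow_self (by norm_num)
    have hl : l < 4 ^ l := Nat.lt_pow_self (by norm_num)
    rcases lt_trichotomy l k with h | rfl | h
    · have : 4 ^ (l + 1) ≤ 4 ^ k := Nat.pow_le_pow_right (by norm_num) h
      rw [pow_succ] at this
      omega
    · omega
    · have : 4 ^ (k + 1) ≤ 4 ^ l := Nat.pow_le_pow_right (by norm_num) h
      rw [pow_succ] at this
      omega
  · exact h ⟨k, by omega, by omega⟩

theorem stmt15 (s : ℝ) (hs : s ∈ Set.Icc (0 : ℝ) 1) :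
    ∃ E : Set ℝ, IsCompact E ∧ dimH E = ENNReal.ofReal s ∧ fourierDim E = 0 ∧
      ∀ k : ℕ, 3 ≤ k → ∃ t δ : ℝ, 0 < δ ∧ ∀ j : ℕ, j < k → t + j * δ ∈ E := by
  refine ⟨digitSet (goodPositions s), isCompact_digitSet _,
    dimH_digitSet hs.1 fun ε hε => goodPositions_density hs hε, fourierDim_digitSet fun N => ?_,
    fun k _ => ⟨0, ((2 : ℝ) ^ (4 ^ k + k))⁻¹, by positivity, fun j hj => ?_⟩⟩
  · refine ⟨4 ^ (N + 3) + (N + 3), le_add_left (by omega),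
      fun i hi => not_mem_goodPositions s (by omega)⟩
  · rw [zero_add]
    refine dyadic_mem_digitSet (fun i hi => Or.inl ⟨k, by omega, by omega⟩) ?_
    exact hj.trans (Nat.lt_pow_self (by norm_num))
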